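/- Let $\Gamma$ be a finite distance-regular graph of diameter $D \ge 2$ and valency $k \ge 2$ (that is, a connected finite simple graph such that for all $0 \le h,i,j \le D$ the number of vertices $z$ with $d(x,z)=i$ and $d(y,z)=j$ is the same for all pairs of vertices $x,y$ at distance $h$). For a nonzero real number $q$, the $q$-distance matrix $\mathbb{D}_q$ of $\Gamma$ is the real symmetric matrix indexed by the vertices with $(\mathbb{D}_q)_{xy} = \sum_{j=0}^{d(x,y)-1} q^{-j}$ for $x \ne y$ and $(\mathbb{D}_q)_{xx} = 0$. Let $x$ be a vertex of $\Gamma$, and let $\Delta(x)$ be the local graph of $x$, i.e., the subgraph of $\Gamma$ induced on the neighbors of $x$. Eigenvalues are counted with multiplicity. (i) If $\mathbb{D}_q$ has exactly one positive eigenvalue for some real $q > 0$, then the smallest eigenvalue $\lambda_{\min}$ of the adjacency matrix of $\Delta(x)$ satisfies $\lambda_{\min} \ge -q-1$. (ii) If $\mathbb{D}_q$ has exactly one positive eigenvalue for some real $q < 0$, then the second largest eigenvalue $\lambda_2$ of the adjacency matrix of $\Delta(x)$ satisfies $\lambda_2 \le -q-1$. -/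

import Mathlib

/-- A finite connected graph `G` is distance-regular if for all `h, i, j` between `0` and the
diameter there is a constant `p^h_{ij}` such that any two vertices `x, y` at distance `h` have
exactly `p^h_{ij}` vertices `z` with `d(x,z) = i` and `d(y,z) = j`. -/
structure IsDistanceRegular {V : Type*} [Fintype V] (G : SimpleGraph V) : Prop where
  connected : G.Connected
  exists_intersection_number : ∀ h i j : ℕ, h ≤ G.diam → i ≤ G.diam → j ≤ G.diam →
    ∃ p : ℕ, ∀ x y : V, G.dist x y = h →
      (Finset.univ.filter fun z : V => G.dist x z = i ∧ G.dist y z = j).card = p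

/-- The `q`-distance matrix of `G`: the `(x,y)` entry is `∑_{j=0}^{d(x,y)-1} q^{-j}`; the empty
sum gives `0` on the diagonal. -/
noncomputable def qDistMatrix {V : Type*} (G : SimpleGraph V) (q : ℝ) : Matrix V V ℝ :=
  Matrix.of fun x y => ∑ j ∈ Finset.range (G.dist x y), q⁻¹ ^ j

theorem qDistMatrix_isHermitian {V : Type*} (G : SimpleGraph V) (q : ℝ) :
    (qDistMatrix G q).IsHermitian := by
  ext x y
  simp [qDistMatrix, G.dist_comm]

theorem adjMatrix_isHermitian {V : Type*} (G : SimpleGraph V) [DecidableRel G.Adj] :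
    (G.adjMatrix ℝ).IsHermitian := by
  ext x y
  simp [SimpleGraph.adjMatrix_apply, G.adj_comm]

/-- Exactly one eigenvalue, counted with multiplicity, is positive. -/
def HasExactlyOnePosEigenvalue {n : Type*} [Fintype n] [DecidableEq n] (M : Matrix n n ℝ)
    (hM : M.IsHermitian) : Prop :=
  (Finset.univ.filter fun i : n => 0 < hM.eigenvalues i).card = 1

/-- The smallest eigenvalue of a symmetric matrix of order at least `1`: the last entry of the
list `hM.eigenvalues₀` of its eigenvalues with multiplicity in nonincreasing order. -/
noncomputable def smallestEigenvalue {n : Type*} [Fintype n] [DecidableEq n] (M : Matrix n n ℝ)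
    (hM : M.IsHermitian) (hn : 1 ≤ Fintype.card n) : ℝ :=
  hM.eigenvalues₀ ⟨Fintype.card n - 1, Nat.sub_lt hn Nat.one_pos⟩

/-- The second largest eigenvalue of a symmetric matrix of order at least `2`: the second entry of
the list `hM.eigenvalues₀` of its eigenvalues with multiplicity in nonincreasing order. -/
noncomputable def secondLargestEigenvalue {n : Type*} [Fintype n] [DecidableEq n]
    (M : Matrix n n ℝ) (hM : M.IsHermitian) (hn : 2 ≤ Fintype.card n) : ℝ :=
  hM.eigenvalues₀ ⟨1, hn⟩

/-- The local graph of `G` at `x`: the subgraph induced on the neighbors of `x`. -/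
abbrev localGraph {V : Type*} (G : SimpleGraph V) (x : V) : SimpleGraph (G.neighborSet x) :=
  G.induce (G.neighborSet x)

theorem two_le_card_neighborSet {V : Type*} [Fintype V] {G : SimpleGraph V} [DecidableRel G.Adj]
    {k : ℕ} (hreg : G.IsRegularOfDegree k) (hk : 2 ≤ k) (x : V) :
    2 ≤ Fintype.card (G.neighborSet x) := by
  rw [G.card_neighborSet_eq_degree, hreg.degree_eq]
  exact hk

open Matrix in
theorem Matrix.IsHermitian.dotProduct_mulVec_eq_sum_eigenvalues {n : Type*} [Fintype n]
    [DecidableEq n] {M : Matrix n n ℝ} (hM : M.IsHermitian) (y : n → ℝ) :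
    y ⬝ᵥ M *ᵥ y = ∑ i, hM.eigenvalues i * (⇑(hM.eigenvectorBasis i) ⬝ᵥ y) ^ 2 := by
  have hy : y = ∑ i, (⇑(hM.eigenvectorBasis i) ⬝ᵥ y) • ⇑(hM.eigenvectorBasis i) := by
    have h := hM.eigenvectorBasis.sum_repr (WithLp.toLp 2 y)
    have h' := congrArg WithLp.ofLp h
    simp only [OrthonormalBasis.repr_apply_apply, WithLp.ofLp_sum, WithLp.ofLp_smul,
      EuclideanSpace.inner_eq_star_dotProduct, star_trivial, dotProduct_comm y] at h'
    exact h'.symm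
  have hMy : M *ᵥ y = M *ᵥ ∑ i, (⇑(hM.eigenvectorBasis i) ⬝ᵥ y) • ⇑(hM.eigenvectorBasis i) := by
    rw [← hy]
  rw [hMy, mulVec_sum, dotProduct_sum]
  refine Finset.sum_congr rfl fun i _ => ?_
  rw [mulVec_smul, hM.mulVec_eigenvectorBasis, dotProduct_smul, dotProduct_smul,
    dotProduct_comm y, smul_eq_mul, smul_eq_mul]
  ring

open Matrix in
theorem Matrix.IsHermitian.dotProduct_eigenvectorBasis {n : Type*} [Fintype n]
    [DecidableEq n] {M : Matrix n n ℝ} (hM : M.IsHermitian) (i j : n) :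
    ⇑(hM.eigenvectorBasis i) ⬝ᵥ ⇑(hM.eigenvectorBasis j) = if i = j then 1 else 0 := by
  rw [← orthonormal_iff_ite.mp hM.eigenvectorBasis.orthonormal i j,
    EuclideanSpace.inner_eq_star_dotProduct, dotProduct_comm]
  simp

open Matrix in
theorem Matrix.IsHermitian.dotProduct_mulVec_comm {n : Type*} [Fintype n]
    {M : Matrix n n ℝ} (hM : M.IsHermitian) (u w : n → ℝ) :
    u ⬝ᵥ M *ᵥ w = w ⬝ᵥ M *ᵥ u := by
  have hT : Mᵀ = M := by simpa [conjTranspose_eq_transpose_of_trivial] using hM.eq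
  rw [dotProduct_mulVec, ← mulVec_transpose, hT, dotProduct_comm]

open Matrix in
theorem HasExactlyOnePosEigenvalue.exists_nonpos_on_orthogonal {n : Type*} [Fintype n]
    [DecidableEq n] {M : Matrix n n ℝ} {hM : M.IsHermitian}
    (h : HasExactlyOnePosEigenvalue M hM) :
    ∃ e : n → ℝ, ∀ y, e ⬝ᵥ y = 0 → y ⬝ᵥ M *ᵥ y ≤ 0 := by
  obtain ⟨i, hi⟩ := Finset.card_eq_one.mp h
  refine ⟨hM.eigenvectorBasis i, fun y hy => ?_⟩
  rw [hM.dotProduct_mulVec_eq_sum_eigenvalues]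
  refine Finset.sum_nonpos fun j _ => ?_
  by_cases hj : j = i
  · simp [hj, hy]
  · have : ¬ 0 < hM.eigenvalues j := fun hpos =>
      hj (by simpa [hi] using (Finset.mem_filter.mpr ⟨Finset.mem_univ j, hpos⟩ :
        j ∈ Finset.univ.filter fun i => 0 < hM.eigenvalues i))
    exact mul_nonpos_of_nonpos_of_nonneg (not_lt.mp this) (sq_nonneg _)

open Matrix in
/-- The reverse Cauchy–Schwarz inequality for a form with exactly one positive eigenvalue. -/
theorem HasExactlyOnePosEigenvalue.mul_le_sq {n : Type*} [Fintype n]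
    [DecidableEq n] {M : Matrix n n ℝ} {hM : M.IsHermitian}
    (h : HasExactlyOnePosEigenvalue M hM) (u : n → ℝ) {w : n → ℝ} (hw : 0 < w ⬝ᵥ M *ᵥ w) :
    (u ⬝ᵥ M *ᵥ u) * (w ⬝ᵥ M *ᵥ w) ≤ (u ⬝ᵥ M *ᵥ w) ^ 2 := by
  obtain ⟨e, he⟩ := h.exists_nonpos_on_orthogonal
  have hew : e ⬝ᵥ w ≠ 0 := fun h0 => (he w h0).not_gt hw
  set s := (e ⬝ᵥ u) / (e ⬝ᵥ w) with hs
  have hz := he (u - s • w) (by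
    rw [dotProduct_sub, dotProduct_smul, smul_eq_mul, hs, div_mul_cancel₀ _ hew, sub_self])
  simp only [mulVec_sub, mulVec_smul, sub_dotProduct, dotProduct_sub, smul_dotProduct,
    dotProduct_smul, smul_eq_mul, hM.dotProduct_mulVec_comm w u] at hz
  nlinarith [sq_nonneg (s * (w ⬝ᵥ M *ᵥ w) - u ⬝ᵥ M *ᵥ w)]

open Matrix in
theorem HasExactlyOnePosEigenvalue.submatrix_nonpos_of_sum_eq_zero {n m : Type*} [Fintype n]
    [DecidableEq n] [Fintype m] [Nonempty m] {M : Matrix n n ℝ} {hM : M.IsHermitian}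
    (h : HasExactlyOnePosEigenvalue M hM) (f : m → n) (x : n) (hx : M x x = 0)
    (hxf : ∀ y, M x (f y) = 1) (v : m → ℝ) (hv : ∑ y, v y = 0) :
    v ⬝ᵥ M.submatrix f f *ᵥ v ≤ 0 := by
  by_contra! hpos
  let L : (m → ℝ) → n → ℝ := fun v a => ∑ y, if f y = a then v y else 0
  have hL (v : m → ℝ) (F : n → ℝ) : L v ⬝ᵥ F = ∑ y, v y * F (f y) := by
    simp only [L, dotProduct, Finset.sum_mul]
    rw [Finset.sum_comm]
    simp
  have hLL (v w : m → ℝ) : L v ⬝ᵥ M *ᵥ L w = v ⬝ᵥ M.submatrix f f *ᵥ w := by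
    rw [hL]
    refine Finset.sum_congr rfl fun y _ => ?_
    rw [mulVec, dotProduct_comm, hL, mulVec, dotProduct_comm]
    rfl
  have hxL (w : m → ℝ) : (Pi.single x 1 : n → ℝ) ⬝ᵥ M *ᵥ L w = ∑ y, w y := by
    rw [single_dotProduct, one_mul, mulVec, dotProduct_comm, hL]
    simp [hxf]
  have hxx : (Pi.single x 1 : n → ℝ) ⬝ᵥ M *ᵥ Pi.single x 1 = 0 := by simp [hx]
  set a := v ⬝ᵥ M.submatrix f f *ᵥ v
  set c := (1 : m → ℝ) ⬝ᵥ M.submatrix f f *ᵥ 1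
  set d := (1 : m → ℝ) ⬝ᵥ M.submatrix f f *ᵥ v
  have hm : (0 : ℝ) < Fintype.card m := by exact_mod_cast Fintype.card_pos
  set t : ℝ := (d ^ 2 / a + 1 - c) / (2 * Fintype.card m) with ht
  have key := h.mul_le_sq (L 1 + t • Pi.single x 1) (w := L v) (by rw [hLL]; exact hpos)
  have hcard : ∑ y : m, (1 : m → ℝ) y = Fintype.card m := by simp
  simp only [mulVec_add, mulVec_smul, add_dotProduct, dotProduct_add, smul_dotProduct,
    dotProduct_smul, smul_eq_mul, hM.dotProduct_mulVec_comm (L 1) (Pi.single x 1), hLL, hxL, hxx,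
    hv, hcard] at key
  have h2 : c + t * Fintype.card m + t * (Fintype.card m + t * 0) = d ^ 2 / a + 1 := by
    rw [ht]; field_simp; ring
  have h3 : (d ^ 2 / a + 1) * a = d ^ 2 + a := by field_simp
  change (c + t * _ + t * (_ + t * 0)) * a ≤ (d + t * 0) ^ 2 at key
  rw [h2, h3, mul_zero, add_zero] at key
  linarith

theorem qDistMatrix_apply_of_adj {V : Type*} {G : SimpleGraph V} (q : ℝ) {x y : V}
    (h : G.Adj x y) : qDistMatrix G q x y = 1 := by
  simp [qDistMatrix, SimpleGraph.dist_eq_one_iff_adj.mpr h]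

/-- Two neighbors of `x` are at distance at most `2`, so the `q`-distance matrix of `G` restricted
to them is an affine combination of the local adjacency matrix and the all-ones matrix. -/
theorem qDistMatrix_submatrix_neighborSet {V : Type*} [DecidableEq V] {G : SimpleGraph V}
    [DecidableRel G.Adj] (q : ℝ) (x : V) (y z : G.neighborSet x) :
    qDistMatrix G q y z =
      (1 + q⁻¹) * (1 - (1 : Matrix (G.neighborSet x) (G.neighborSet x) ℝ) y z) -
        q⁻¹ * (localGraph G x).adjMatrix ℝ y z := by
  by_cases hyz : y = z
  · subst hyz
    simp [qDistMatrix]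
  by_cases hadj : G.Adj y z
  · rw [qDistMatrix_apply_of_adj q hadj]
    simp [hyz, hadj, SimpleGraph.adjMatrix_apply]
  · have hne : (y : V) ≠ z := fun h => hyz (Subtype.ext h)
    let p : G.Walk y z := .cons (G.adj_symm y.2) (.cons z.2 .nil)
    have h1 := (SimpleGraph.Walk.reachable p).one_lt_dist_of_ne_of_not_adj hne hadj
    have h2 : G.dist y z ≤ 2 := G.dist_le p
    have hd : G.dist y z = 2 := by omega
    simp [qDistMatrix, hd, hyz, hadj, SimpleGraph.adjMatrix_apply, Finset.sum_range_succ]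

open Matrix in
/-- If the `q`-distance matrix has exactly one positive eigenvalue, then the local adjacency
matrix is bounded on zero-sum vectors. -/
theorem HasExactlyOnePosEigenvalue.local_bound {V : Type*} [Fintype V] [DecidableEq V]
    {G : SimpleGraph V} [DecidableRel G.Adj] {q : ℝ} {x : V} [Nonempty (G.neighborSet x)]
    (h : HasExactlyOnePosEigenvalue (qDistMatrix G q) (qDistMatrix_isHermitian G q))
    (v : G.neighborSet x → ℝ) (hv : ∑ y, v y = 0) :
    0 ≤ (1 + q⁻¹) * (v ⬝ᵥ v) + q⁻¹ * (v ⬝ᵥ (localGraph G x).adjMatrix ℝ *ᵥ v) := by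
  have key := h.submatrix_nonpos_of_sum_eq_zero (fun y : G.neighborSet x => (y : V)) x
    (by simp [qDistMatrix]) (fun y => qDistMatrix_apply_of_adj q y.2) v hv
  have hB : (qDistMatrix G q).submatrix (fun y : G.neighborSet x => (y : V))
      (fun y : G.neighborSet x => (y : V)) =
      (1 + q⁻¹) • (vecMulVec 1 1 - (1 : Matrix (G.neighborSet x) (G.neighborSet x) ℝ)) -
        q⁻¹ • (localGraph G x).adjMatrix ℝ := by
    ext y z
    simp [qDistMatrix_submatrix_neighborSet q x y z]
  have hJ : vecMulVec (1 : G.neighborSet x → ℝ) 1 *ᵥ v = 0 := by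
    ext y
    simp [mulVec, dotProduct, vecMulVec_apply, hv]
  rw [hB, sub_mulVec, smul_mulVec, smul_mulVec, sub_mulVec, hJ, one_mulVec] at key
  simp only [dotProduct_sub, dotProduct_smul, smul_eq_mul, dotProduct_zero] at key
  linarith

theorem IsDistanceRegular.exists_localGraph_isRegularOfDegree {V : Type*} [Fintype V]
    [DecidableEq V] {G : SimpleGraph V} [DecidableRel G.Adj] (hG : IsDistanceRegular G)
    (hD : 1 ≤ G.diam) (x : V) : ∃ a, (localGraph G x).IsRegularOfDegree a := by
  obtain ⟨a, ha⟩ := hG.exists_intersection_number 1 1 1 hD hD hD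
  refine ⟨a, fun y => ?_⟩
  rw [← ha x y (SimpleGraph.dist_eq_one_iff_adj.mpr y.2),
    ← SimpleGraph.card_neighborFinset_eq_degree]
  refine Finset.card_bij (fun z _ => (z : V)) ?_ ?_ ?_
  · intro z hz
    simpa [SimpleGraph.dist_eq_one_iff_adj] using ⟨z.2, by simpa using hz⟩
  · intro z _ z' _ hzz
    exact Subtype.ext hzz
  · intro z hz
    simp only [Finset.mem_filter, Finset.mem_univ, true_and,
      SimpleGraph.dist_eq_one_iff_adj] at hz
    exact ⟨⟨z, hz.1⟩, by simpa using hz.2, rfl⟩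

open Matrix in
theorem Matrix.IsHermitian.exists_orthonormal_eigenvectors {n : Type*} [Fintype n]
    [DecidableEq n] {M : Matrix n n ℝ} (hM : M.IsHermitian) :
    ∃ b : Fin (Fintype.card n) → n → ℝ, (∀ i, M *ᵥ b i = hM.eigenvalues₀ i • b i) ∧
      ∀ i j, b i ⬝ᵥ b j = if i = j then 1 else 0 := by
  let e : Fin (Fintype.card n) ≃ n := Fintype.equivOfCardEq (Fintype.card_fin _)
  refine ⟨fun i => hM.eigenvectorBasis (e i), fun i => ?_, fun i j => ?_⟩
  · rw [hM.mulVec_eigenvectorBasis]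
    simp [eigenvalues, e]
  · simp [hM.dotProduct_eigenvectorBasis]

open Matrix in
theorem SimpleGraph.IsRegularOfDegree.sum_eq_zero_of_mulVec_eq {W : Type*} [Fintype W]
    {H : SimpleGraph W} [DecidableRel H.Adj] {a : ℕ} (hH : H.IsRegularOfDegree a) {θ : ℝ}
    {v : W → ℝ} (hv : H.adjMatrix ℝ *ᵥ v = θ • v) (hθ : θ < 0) : ∑ y, v y = 0 := by
  have h1 : (1 : W → ℝ) ⬝ᵥ H.adjMatrix ℝ *ᵥ v = a * ∑ y, v y := by
    rw [(adjMatrix_isHermitian H).dotProduct_mulVec_comm]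
    have : H.adjMatrix ℝ *ᵥ 1 = fun _ => (a : ℝ) := by
      ext y
      simp [SimpleGraph.adjMatrix_mulVec_apply, hH.degree_eq y]
    rw [this]
    simp [dotProduct, ← Finset.sum_mul, mul_comm]
  rw [hv, dotProduct_smul, one_dotProduct, smul_eq_mul] at h1
  have ha : (0 : ℝ) ≤ a := a.cast_nonneg
  have h2 : (θ - a) * ∑ y, v y = 0 := by linarith
  exact (mul_eq_zero.mp h2).resolve_left (by linarith)

open Matrix in
theorem Matrix.IsHermitian.exists_sum_eq_zero_secondLargestEigenvalue_le {n : Type*} [Fintype n]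
    [DecidableEq n] {M : Matrix n n ℝ} (hM : M.IsHermitian) (hn : 2 ≤ Fintype.card n) :
    ∃ v : n → ℝ, ∑ y, v y = 0 ∧ 0 < v ⬝ᵥ v ∧
      secondLargestEigenvalue M hM hn * (v ⬝ᵥ v) ≤ v ⬝ᵥ M *ᵥ v := by
  obtain ⟨b, hb, hbb⟩ := hM.exists_orthonormal_eigenvectors
  let i : Fin (Fintype.card n) := ⟨0, by omega⟩
  let j : Fin (Fintype.card n) := ⟨1, hn⟩
  have hij : i ≠ j := by simp [i, j]
  have hle : hM.eigenvalues₀ j ≤ hM.eigenvalues₀ i := hM.eigenvalues₀_antitone (by simp [i, j])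
  change ∃ v : n → ℝ, ∑ y, v y = 0 ∧ 0 < v ⬝ᵥ v ∧ hM.eigenvalues₀ j * (v ⬝ᵥ v) ≤ v ⬝ᵥ M *ᵥ v
  by_cases hj : ∑ y, b j y = 0
  · exact ⟨b j, hj, by simp [hbb], by simp [hb, hbb]⟩
  · set s := (∑ y, b i y) / ∑ y, b j y with hs
    have hvv : (b i - s • b j) ⬝ᵥ (b i - s • b j) = 1 + s ^ 2 := by
      simp [hbb, hij, hij.symm, sq]
    have hMv : (b i - s • b j) ⬝ᵥ M *ᵥ (b i - s • b j) =
        hM.eigenvalues₀ i + s ^ 2 * hM.eigenvalues₀ j := by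
      simp only [mulVec_sub, mulVec_smul, hb, sub_dotProduct, dotProduct_sub, smul_dotProduct,
        dotProduct_smul, smul_eq_mul, hbb, if_neg hij, if_neg hij.symm, if_pos]
      ring
    refine ⟨b i - s • b j, ?_, ?_, ?_⟩
    · simp [← Finset.mul_sum, hs, hj]
    · rw [hvv]; positivity
    · rw [hvv, hMv]; linarith

/-- Let `G` be a distance-regular graph of diameter at least `2` and valency `k ≥ 2`, and let `x`
be a vertex. If the `q`-distance matrix of `G` has exactly one positive eigenvalue, then the
smallest eigenvalue of the local graph at `x` is at least `-q - 1` when `q > 0`, and the second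
largest eigenvalue of the local graph at `x` is at most `-q - 1` when `q < 0`. -/
theorem stmt17 {V : Type*} [Fintype V] [DecidableEq V] (G : SimpleGraph V) [DecidableRel G.Adj]
    (hG : IsDistanceRegular G) (hD : 2 ≤ G.diam)
    (k : ℕ) (hreg : G.IsRegularOfDegree k) (hk : 2 ≤ k) (x : V) :
    (∀ q : ℝ, 0 < q →
      HasExactlyOnePosEigenvalue (qDistMatrix G q) (qDistMatrix_isHermitian G q) →
      smallestEigenvalue ((localGraph G x).adjMatrix ℝ)
        (adjMatrix_isHermitian (localGraph G x))
        (one_le_two.trans (two_le_card_neighborSet hreg hk x)) ≥ -q - 1) ∧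
    (∀ q : ℝ, q < 0 →
      HasExactlyOnePosEigenvalue (qDistMatrix G q) (qDistMatrix_isHermitian G q) →
      secondLargestEigenvalue ((localGraph G x).adjMatrix ℝ)
        (adjMatrix_isHermitian (localGraph G x))
        (two_le_card_neighborSet hreg hk x) ≤ -q - 1) := by

  have hcard := two_le_card_neighborSet hreg hk x
  have : Nonempty (G.neighborSet x) := Fintype.card_pos_iff.mp (by omega)
  refine ⟨fun q hq h => ?_, fun q hq h => ?_⟩
  · obtain ⟨a, ha⟩ := hG.exists_localGraph_isRegularOfDegree (by omega) x
    obtain ⟨b, hb, hbb⟩ :=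
      (adjMatrix_isHermitian (localGraph G x)).exists_orthonormal_eigenvectors
    by_contra! hlt
    have hsum := ha.sum_eq_zero_of_mulVec_eq (hb ⟨_, Nat.sub_lt (by omega) Nat.one_pos⟩)
      (hlt.trans (by linarith))
    have key := h.local_bound _ hsum
    rw [hb, dotProduct_smul, hbb, if_pos rfl, smul_eq_mul, mul_one, mul_one] at key
    have := mul_nonneg hq.le key
    field_simp at this
    unfold smallestEigenvalue at hlt
    linarith
  · obtain ⟨v, hsum, hpos, hle⟩ := (adjMatrix_isHermitian
      (localGraph G x)).exists_sum_eq_zero_secondLargestEigenvalue_le hcard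
    have key := mul_nonpos_of_nonpos_of_nonneg hq.le (h.local_bound v hsum)
    rw [mul_add, ← mul_assoc, ← mul_assoc, mul_add, mul_inv_cancel₀ hq.ne, mul_one, one_mul] at key
    exact le_of_mul_le_mul_right (by linarith) hpos
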